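/- Let B be an associative algebra smooth over R and M a finitely generated projective B-bimodule (possibly graded). Then the tensor algebra A = T_B M is smooth over R, i.e., A is finitely generated over R and Ω¹_R A is a projective A-bimodule. -/

import Mathlib

/-!
STATEMENT 5: If `B` is smooth over `R` and `M` is a finitely generated
projective `B`-bimodule, then the tensor algebra `A = T_B M` is smooth over
`R`: `A` is finitely generated over `R` and `Ω¹_R A` is a projective
`A`-bimodule.

Smoothness is encoded concretely: `Ω¹_R C = ker(C ⊗_R C → C)` (with `C ⊗_R C`
a quotient of `C ⊗_k C`), and projectivity of a bimodule is encoded as being a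
bimodule retract of a finite free bimodule `(C ⊗ Cᵐᵒᵖ)ⁿ`; finite generation
over `R` means generated as a `k`-algebra by the image of `R` and finitely
many elements.  `A = T_B M` is encoded by the universal property.
-/

open TensorProduct MulOpposite

noncomputable section
namespace Stmt5

variable (k : Type) [Field k]

section Omega
variable (R : Type) [Ring R] [Algebra k R]
variable (C : Type) [Ring C] [Algebra k C] (ρ : R →ₐ[k] C)

/-- Balancing submodule defining `C ⊗_R C` as a quotient of `C ⊗_k C`. -/
def Bal : Submodule k (C ⊗[k] C) :=
  Submodule.span k {z | ∃ (x y : C) (r : R), z = (x * ρ r) ⊗ₜ[k] y - x ⊗ₜ[k] (ρ r * y)}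

abbrev QR := (C ⊗[k] C) ⧸ Bal k R C ρ

/-- Left (outer) action on `C ⊗_R C`. -/
def lact (a : C) : QR k R C ρ →ₗ[k] QR k R C ρ :=
  Submodule.mapQ _ _ (LinearMap.mulLeft k ((a : C) ⊗ₜ[k] (1 : C))) (by
    rw [Bal, Submodule.span_le]
    rintro z ⟨x, y, r, rfl⟩
    simp only [SetLike.mem_coe, Submodule.mem_comap, LinearMap.mulLeft_apply, mul_sub,
      Algebra.TensorProduct.tmul_mul_tmul, mul_one, one_mul]
    exact Submodule.subset_span ⟨a * x, y, r, by rw [mul_assoc]⟩)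

/-- Right (outer) action on `C ⊗_R C`. -/
def ract (b : C) : QR k R C ρ →ₗ[k] QR k R C ρ :=
  Submodule.mapQ _ _ (LinearMap.mulRight k ((1 : C) ⊗ₜ[k] (b : C))) (by
    rw [Bal, Submodule.span_le]
    rintro z ⟨x, y, r, rfl⟩
    simp only [SetLike.mem_coe, Submodule.mem_comap, LinearMap.mulRight_apply, sub_mul,
      Algebra.TensorProduct.tmul_mul_tmul, mul_one, one_mul]
    exact Submodule.subset_span ⟨x, y * b, r, by rw [mul_assoc]⟩)

/-- Multiplication `C ⊗_R C → C`. -/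
def mulBar : QR k R C ρ →ₗ[k] C :=
  Submodule.liftQ _ (LinearMap.mul' k C) (by
    rw [Bal, Submodule.span_le]
    rintro z ⟨x, y, r, rfl⟩
    simp [LinearMap.mul'_apply, mul_assoc])

/-- `Ω¹_R C`. -/
def Omega : Submodule k (QR k R C ρ) := LinearMap.ker (mulBar k R C ρ)

/-- `Ω¹_R C` is a projective `C`-bimodule: it is a bimodule retract of a
finite free bimodule `(C ⊗ Cᵐᵒᵖ)ⁿ`. -/
def OmegaIsProjectiveBimodule : Prop :=
  ∃ (n : ℕ) (f : ↥(Omega k R C ρ) →ₗ[k] (Fin n → C ⊗[k] Cᵐᵒᵖ))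
    (g : (Fin n → C ⊗[k] Cᵐᵒᵖ) →ₗ[k] ↥(Omega k R C ρ)),
    (∀ x, g (f x) = x) ∧
    (∀ (a : C) (x y : ↥(Omega k R C ρ)), (y : QR k R C ρ) = lact k R C ρ a x →
      f y = fun i => (a ⊗ₜ[k] (1 : Cᵐᵒᵖ)) * f x i) ∧
    (∀ (a : C) (x y : ↥(Omega k R C ρ)), (y : QR k R C ρ) = ract k R C ρ a x →
      f y = fun i => ((1 : C) ⊗ₜ[k] op a) * f x i) ∧
    (∀ (a : C) (v : Fin n → C ⊗[k] Cᵐᵒᵖ),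
      ((g (fun i => (a ⊗ₜ[k] (1 : Cᵐᵒᵖ)) * v i) : ↥(Omega k R C ρ)) : QR k R C ρ) =
        lact k R C ρ a (g v)) ∧
    (∀ (a : C) (v : Fin n → C ⊗[k] Cᵐᵒᵖ),
      ((g (fun i => ((1 : C) ⊗ₜ[k] op a) * v i) : ↥(Omega k R C ρ)) : QR k R C ρ) =
        ract k R C ρ a (g v))

/-- `C` is finitely generated over `R`. -/
def IsFGOverR : Prop :=
  ∃ S : Finset C, Algebra.adjoin k (Set.range ρ ∪ ↑S) = ⊤

/-- Smoothness of `C` over `R`. -/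
def IsSmoothOver : Prop := IsFGOverR k R C ρ ∧ OmegaIsProjectiveBimodule k R C ρ

end Omega

/-!
Algebra homomorphisms out of `A = T_B M` lift along surjections `π : E' → E` as soon as their
restrictions to `B` do: once `B → E'` is chosen, the remaining datum is a lift to `E'` of the map
of `B`-bimodules `M → E`, which exists because `M` is projective. Derivations of `B` relative to
`R` are bimodule maps out of `Ω¹_R B`, so they lift along surjections of bimodules by smoothness of
`B`.

A derivation `A → N` is the same as an algebra homomorphism `A → A ⋉ N` over `A`. Hence, for every
surjection of bimodules `N → Ω¹_R A`, the universal derivation lifts to `N`: first on `B`, then on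
`A` along `A ⋉ N → A ⋉ Ω¹_R A`. For `N` free, this splits `N → Ω¹_R A`, so `Ω¹_R A` is projective.
-/

section Bimodule

variable {K : Type*} [CommRing K]

/-- An additive map between modules over a tensor product of algebras that commutes with both
factors, as a linear map over the tensor product. -/
def tensorLinearMap {S T : Type*} [Ring S] [Algebra K S] [Ring T] [Algebra K T]
    {M N : Type*} [AddCommGroup M] [Module (S ⊗[K] T) M] [AddCommGroup N] [Module (S ⊗[K] T) N]
    (f : M →+ N) (hl : ∀ (s : S) m, f ((s ⊗ₜ[K] (1 : T)) • m) = (s ⊗ₜ[K] (1 : T)) • f m)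
    (hr : ∀ (t : T) m, f (((1 : S) ⊗ₜ[K] t) • m) = ((1 : S) ⊗ₜ[K] t) • f m) :
    M →ₗ[S ⊗[K] T] N :=
  { f with
    map_smul' := fun z m => by
      change f (z • m) = z • f m
      induction z with
      | zero => simp
      | add z w hz hw => simp only [add_smul, map_add, hz, hw]
      | tmul s t =>
        have hst : s ⊗ₜ[K] t = (s ⊗ₜ[K] (1 : T)) * ((1 : S) ⊗ₜ[K] t) := by simp
        rw [hst, mul_smul, hl, hr, mul_smul] }

variable {B A E : Type*} [Ring B] [Algebra K B] [Ring A] [Algebra K A] [Ring E] [Algebra K E]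

/-- A `K`-linear map from a `B`-bimodule to an `A`-bimodule that is a map of bimodules along an
algebra homomorphism `φ : B → A`; right multiplication by `b` is the action of `op b`. -/
structure IsBimoduleHom {M N : Type*} [AddCommGroup M] [Module K M] [SMul B M] [SMul Bᵐᵒᵖ M]
    [AddCommGroup N] [Module K N] [SMul A N] [SMul Aᵐᵒᵖ N] (φ : B →ₐ[K] A) (f : M →ₗ[K] N) :
    Prop where
  map_smul : ∀ (b : B) (m : M), f (b • m) = φ b • f m
  map_op_smul : ∀ (b : B) (m : M), f (op b • m) = op (φ b) • f m

lemma isBimoduleHom_algHom (φ : B →ₐ[K] A) : IsBimoduleHom φ φ.toLinearMap :=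
  ⟨fun b x => map_mul φ b x, fun b x => map_mul φ x b⟩

lemma IsBimoduleHom.comp {M N P : Type*} [AddCommGroup M] [Module K M] [SMul B M] [SMul Bᵐᵒᵖ M]
    [AddCommGroup N] [Module K N] [SMul A N] [SMul Aᵐᵒᵖ N]
    [AddCommGroup P] [Module K P] [SMul E P] [SMul Eᵐᵒᵖ P]
    {φ : B →ₐ[K] A} {ψ : A →ₐ[K] E} {g : N →ₗ[K] P} {f : M →ₗ[K] N}
    (hg : IsBimoduleHom ψ g) (hf : IsBimoduleHom φ f) : IsBimoduleHom (ψ.comp φ) (g ∘ₗ f) :=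
  ⟨fun b m => by simp [hf.map_smul, hg.map_smul],
    fun b m => by simp [hf.map_op_smul, hg.map_op_smul]⟩

section Enveloping

variable {P : Type*} [AddCommGroup P] [Module K P] [Module B P] [Module Bᵐᵒᵖ P]
  [SMulCommClass B Bᵐᵒᵖ P] [IsScalarTower K B P] [IsScalarTower K Bᵐᵒᵖ P]

/-- A `B`-bimodule as a module over the enveloping algebra `B ⊗ Bᵐᵒᵖ`. The priority is low so that
`(B ⊗ Bᵐᵒᵖ)ⁿ` keeps its module structure by left multiplication. -/
instance (priority := low) envelopingModule : Module (B ⊗[K] Bᵐᵒᵖ) P :=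
  TensorProduct.Algebra.module

lemma tmul_smul_eq (b : B) (c : Bᵐᵒᵖ) (x : P) : (b ⊗ₜ[K] c) • x = b • c • x := rfl

lemma smul_mem_of_mem (W : Submodule (B ⊗[K] Bᵐᵒᵖ) P) (b : B) {x : P} (hx : x ∈ W) : b • x ∈ W := by
  simpa [tmul_smul_eq] using W.smul_mem (b ⊗ₜ 1) hx

lemma op_smul_mem_of_mem (W : Submodule (B ⊗[K] Bᵐᵒᵖ) P) (c : Bᵐᵒᵖ) {x : P} (hx : x ∈ W) :
    c • x ∈ W := by
  simpa [tmul_smul_eq] using W.smul_mem (1 ⊗ₜ c) hx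

lemma enveloping_smul_mem {W : Submodule K P} (hl : ∀ (b : B), ∀ x ∈ W, b • x ∈ W)
    (hr : ∀ (c : Bᵐᵒᵖ), ∀ x ∈ W, c • x ∈ W) (z : B ⊗[K] Bᵐᵒᵖ) {x : P} (hx : x ∈ W) : z • x ∈ W := by
  induction z with
  | zero => exact (zero_smul (B ⊗[K] Bᵐᵒᵖ) x).symm ▸ zero_mem W
  | tmul b c => exact hl b _ (hr c x hx)
  | add z w hz hw => exact (add_smul z w x).symm ▸ add_mem hz hw

instance : IsScalarTower K (B ⊗[K] Bᵐᵒᵖ) P where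
  smul_assoc r z x := LinearMap.congr_fun (map_smul TensorProduct.Algebra.moduleAux r z) x

lemma IsBimoduleHom.apply_mem_of_span_eq_top {φ : B →ₐ[K] A} {f : P →ₗ[K] A}
    (hf : IsBimoduleHom φ f) {T : Subalgebra K A} (hφ : ∀ b, φ b ∈ T) {S : Set P}
    (hS : Submodule.span (B ⊗[K] Bᵐᵒᵖ) S = ⊤) (hfS : ∀ s ∈ S, f s ∈ T) (x : P) : f x ∈ T := by
  have hx : x ∈ Submodule.span (B ⊗[K] Bᵐᵒᵖ) S := hS ▸ Submodule.mem_top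
  induction hx using Submodule.span_induction with
  | mem s hs => exact hfS s hs
  | zero => simp
  | add x y _ _ hx hy => simpa using add_mem hx hy
  | smul z x _ hx =>
    refine enveloping_smul_mem (W := (Subalgebra.toSubmodule T).comap f)
      (fun b y hy => ?_) (fun c y hy => ?_) z hx
    · change f (b • y) ∈ T
      rw [hf.map_smul]
      exact mul_mem (hφ b) hy
    · change f (op (unop c) • y) ∈ T
      rw [hf.map_op_smul]
      exact mul_mem hy (hφ (unop c))

variable (K B P) in
/-- The `B`-bimodule `P` is a retract of a finite free bimodule `(B ⊗ Bᵐᵒᵖ)ⁿ`, with the maps given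
by their compatibility with the left and the right action. -/
def IsRetractOfFree : Prop :=
  ∃ (n : ℕ) (f : P →ₗ[K] (Fin n → B ⊗[K] Bᵐᵒᵖ)) (g : (Fin n → B ⊗[K] Bᵐᵒᵖ) →ₗ[K] P),
    (∀ x, g (f x) = x) ∧
    (∀ (b : B) (x : P), f (b • x) = fun i => (b ⊗ₜ[K] (1 : Bᵐᵒᵖ)) * f x i) ∧
    (∀ (b : B) (x : P), f (op b • x) = fun i => ((1 : B) ⊗ₜ[K] op b) * f x i) ∧
    (∀ (b : B) (v : Fin n → B ⊗[K] Bᵐᵒᵖ),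
      g (fun i => (b ⊗ₜ[K] (1 : Bᵐᵒᵖ)) * v i) = b • g v) ∧
    (∀ (b : B) (v : Fin n → B ⊗[K] Bᵐᵒᵖ),
      g (fun i => ((1 : B) ⊗ₜ[K] op b) * v i) = op b • g v)

theorem isRetractOfFree_iff : IsRetractOfFree K B P ↔
    Module.Finite (B ⊗[K] Bᵐᵒᵖ) P ∧ Module.Projective (B ⊗[K] Bᵐᵒᵖ) P := by
  constructor
  · rintro ⟨n, f, g, hgf, hfl, hfr, hgl, hgr⟩
    let f' : P →ₗ[B ⊗[K] Bᵐᵒᵖ] (Fin n → B ⊗[K] Bᵐᵒᵖ) := tensorLinearMap f.toAddMonoidHom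
      (fun b x => by simpa [tmul_smul_eq] using! hfl b x)
      (fun b x => by simpa [tmul_smul_eq] using! hfr (unop b) x)
    let g' : (Fin n → B ⊗[K] Bᵐᵒᵖ) →ₗ[B ⊗[K] Bᵐᵒᵖ] P := tensorLinearMap g.toAddMonoidHom
      (fun b v => by simpa [tmul_smul_eq] using! hgl b v)
      (fun b v => by simpa [tmul_smul_eq] using! hgr (unop b) v)
    exact ⟨.of_surjective g' fun x => ⟨f x, hgf x⟩, .of_split f' g' (LinearMap.ext hgf)⟩
  · rintro ⟨_, _⟩
    obtain ⟨n, g, f, -, -, hgf⟩ := Module.Finite.exists_comp_eq_id_of_projective (B ⊗[K] Bᵐᵒᵖ) P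
    refine ⟨n, f.restrictScalars K, g.restrictScalars K, LinearMap.congr_fun hgf,
      fun b x => ?_, fun b x => ?_, fun b v => ?_, fun b v => ?_⟩
    · simpa [tmul_smul_eq] using! map_smul f (b ⊗ₜ[K] (1 : Bᵐᵒᵖ)) x
    · simpa [tmul_smul_eq] using! map_smul f ((1 : B) ⊗ₜ[K] op b) x
    · exact (map_smul g (b ⊗ₜ[K] (1 : Bᵐᵒᵖ)) v).trans (congrArg (b • ·) (one_smul _ (g v)))
    · exact (map_smul g ((1 : B) ⊗ₜ[K] op b) v).trans (one_smul _ (op b • g v))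

variable {N : Type*} [AddCommGroup N] [Module K N] [Module A N] [Module Aᵐᵒᵖ N]
  [SMulCommClass A Aᵐᵒᵖ N] [IsScalarTower K A N] [IsScalarTower K Aᵐᵒᵖ N]
variable {N' : Type*} [AddCommGroup N'] [Module K N'] [Module E N'] [Module Eᵐᵒᵖ N']
  [SMulCommClass E Eᵐᵒᵖ N'] [IsScalarTower K E N'] [IsScalarTower K Eᵐᵒᵖ N']

theorem exists_bimoduleHom_lift [Module.Projective (B ⊗[K] Bᵐᵒᵖ) P]
    {τ : E →ₐ[K] A} {p : N' →ₗ[K] N} (hp : IsBimoduleHom τ p) (hsurj : Function.Surjective p)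
    {φ : B →ₐ[K] E} {u : P →ₗ[K] N} (hu : IsBimoduleHom (τ.comp φ) u) :
    ∃ v : P →ₗ[K] N', IsBimoduleHom φ v ∧ p ∘ₗ v = u := by
  let : Module (B ⊗[K] Bᵐᵒᵖ) N' :=
    Module.compHom N' (Algebra.TensorProduct.map φ φ.op).toRingHom
  let : Module (B ⊗[K] Bᵐᵒᵖ) N :=
    Module.compHom N (Algebra.TensorProduct.map (τ.comp φ) (τ.comp φ).op).toRingHom
  have tmul_smul_source (b c) (x : N') : (b ⊗ₜ[K] c : B ⊗[K] Bᵐᵒᵖ) • x =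
      φ b • op (φ (unop c)) • x := rfl
  have tmul_smul_target (b c) (x : N) : (b ⊗ₜ[K] c : B ⊗[K] Bᵐᵒᵖ) • x =
      τ (φ b) • op (τ (φ (unop c))) • x := rfl
  let p' : N' →ₗ[B ⊗[K] Bᵐᵒᵖ] N := tensorLinearMap p.toAddMonoidHom
    (fun b x => by simp [tmul_smul_source, tmul_smul_target, hp.map_smul])
    (fun c x => by simp [tmul_smul_source, tmul_smul_target, hp.map_op_smul])
  let u' : P →ₗ[B ⊗[K] Bᵐᵒᵖ] N := tensorLinearMap u.toAddMonoidHom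
    (fun b x => by simp [tmul_smul_eq, tmul_smul_target, hu.map_smul])
    (fun c x => by simpa [tmul_smul_eq, tmul_smul_target] using hu.map_op_smul (unop c) x)
  obtain ⟨v, hv⟩ := Module.projective_lifting_property p' u' hsurj
  have hK : IsScalarTower K (B ⊗[K] Bᵐᵒᵖ) N' := ⟨fun r z x => by
    change Algebra.TensorProduct.map φ φ.op (r • z) • x =
      r • Algebra.TensorProduct.map φ φ.op z • x
    rw [map_smul, smul_assoc]⟩
  refine ⟨v.restrictScalars K, ⟨fun b x => ?_, fun b x => ?_⟩,
    LinearMap.ext fun x => LinearMap.congr_fun hv x⟩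
  · simpa [tmul_smul_eq, tmul_smul_source] using v.map_smul (b ⊗ₜ 1) x
  · simpa [tmul_smul_eq, tmul_smul_source] using v.map_smul (1 ⊗ₜ op b) x

end Enveloping
end Bimodule

section OmegaBimodule

variable {k}
variable {R : Type} [Ring R] [Algebra k R] {C : Type} [Ring C] [Algebra k C] {ρ : R →ₐ[k] C}

@[simp]
lemma lact_mk (a x y : C) : lact k R C ρ a (Submodule.Quotient.mk (x ⊗ₜ[k] y)) =
    Submodule.Quotient.mk ((a * x) ⊗ₜ[k] y) := by
  simp [lact]

@[simp]
lemma ract_mk (a x y : C) : ract k R C ρ a (Submodule.Quotient.mk (x ⊗ₜ[k] y)) =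
    Submodule.Quotient.mk (x ⊗ₜ[k] (y * a)) := by
  simp [ract]

@[simp]
lemma mulBar_mk (x y : C) :
    mulBar k R C ρ (Submodule.Quotient.mk (x ⊗ₜ[k] y)) = x * y := by
  simp [mulBar]

variable (ρ) in
/-- Left multiplication on `C ⊗_R C` as a representation of `C`. -/
def leftAction : C →ₐ[k] Module.End k (QR k R C ρ) :=
  AlgHom.ofLinearMap
    { toFun := lact k R C ρ
      map_add' := fun a b => by ext; simp [add_mul, add_tmul]
      map_smul' := fun c a => by ext; simp [← smul_tmul'] }
    (by ext; simp)
    (fun a b => by ext; simp [mul_assoc])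

variable (ρ) in
/-- Right multiplication on `C ⊗_R C` as a representation of `Cᵐᵒᵖ`. -/
def rightAction : Cᵐᵒᵖ →ₐ[k] Module.End k (QR k R C ρ) :=
  AlgHom.ofLinearMap
    { toFun := fun a => ract k R C ρ (unop a)
      map_add' := fun a b => by ext; simp [mul_add, tmul_add]
      map_smul' := fun c a => by ext; simp }
    (by ext; simp)
    (fun a b => by ext; simp [mul_assoc])

instance : Module C (QR k R C ρ) := Module.compHom _ (leftAction ρ).toRingHom

instance : Module Cᵐᵒᵖ (QR k R C ρ) := Module.compHom _ (rightAction ρ).toRingHom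

@[simp]
lemma QR.smul_def (a : C) (q : QR k R C ρ) : a • q = lact k R C ρ a q := rfl

@[simp]
lemma QR.op_smul_def (a : Cᵐᵒᵖ) (q : QR k R C ρ) : a • q = ract k R C ρ (unop a) q := rfl

instance : SMulCommClass C Cᵐᵒᵖ (QR k R C ρ) where
  smul_comm a b q := by
    have : lact k R C ρ a ∘ₗ ract k R C ρ (unop b) = ract k R C ρ (unop b) ∘ₗ lact k R C ρ a := by
      ext; simp
    exact LinearMap.congr_fun this q

instance : IsScalarTower k C (QR k R C ρ) where
  smul_assoc c a q := LinearMap.congr_fun (map_smul (leftAction ρ) c a) q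

instance : IsScalarTower k Cᵐᵒᵖ (QR k R C ρ) where
  smul_assoc c a q := LinearMap.congr_fun (map_smul (rightAction ρ) c a) q

lemma isBimoduleHom_mulBar : IsBimoduleHom (.id k C) (mulBar k R C ρ) where
  map_smul a q := by
    have : mulBar k R C ρ ∘ₗ lact k R C ρ a = LinearMap.mulLeft k a ∘ₗ mulBar k R C ρ := by
      ext; simp [mul_assoc]
    exact LinearMap.congr_fun this q
  map_op_smul a q := by
    have : mulBar k R C ρ ∘ₗ ract k R C ρ a = LinearMap.mulRight k a ∘ₗ mulBar k R C ρ := by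
      ext; simp [mul_assoc]
    exact LinearMap.congr_fun this q

lemma mem_Omega {q : QR k R C ρ} : q ∈ Omega k R C ρ ↔ mulBar k R C ρ q = 0 :=
  LinearMap.mem_ker

instance : SMul C (Omega k R C ρ) where
  smul a x := ⟨a • (x : QR k R C ρ), mem_Omega.2 <| by
    rw [isBimoduleHom_mulBar.map_smul, mem_Omega.1 x.2, smul_zero]⟩

instance : SMul Cᵐᵒᵖ (Omega k R C ρ) where
  smul a x := ⟨a • (x : QR k R C ρ), mem_Omega.2 <|
    (isBimoduleHom_mulBar.map_op_smul (unop a) _).trans <| by rw [mem_Omega.1 x.2, smul_zero]⟩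

@[simp]
lemma Omega.coe_smul (a : C) (x : Omega k R C ρ) :
    ((a • x : Omega k R C ρ) : QR k R C ρ) = a • (x : QR k R C ρ) := rfl

@[simp]
lemma Omega.coe_op_smul (a : Cᵐᵒᵖ) (x : Omega k R C ρ) :
    ((a • x : Omega k R C ρ) : QR k R C ρ) = a • (x : QR k R C ρ) := rfl

instance : Module C (Omega k R C ρ) :=
  Subtype.coe_injective.module C (Omega k R C ρ).subtype.toAddMonoidHom fun _ _ => rfl

instance : Module Cᵐᵒᵖ (Omega k R C ρ) :=
  Subtype.coe_injective.module Cᵐᵒᵖ (Omega k R C ρ).subtype.toAddMonoidHom fun _ _ => rfl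

instance : SMulCommClass C Cᵐᵒᵖ (Omega k R C ρ) where
  smul_comm a b _ := Subtype.ext (smul_comm a b _)

instance : IsScalarTower k C (Omega k R C ρ) where
  smul_assoc c a _ := Subtype.ext (smul_assoc c a _)

instance : IsScalarTower k Cᵐᵒᵖ (Omega k R C ρ) where
  smul_assoc c a _ := Subtype.ext (smul_assoc c a _)

theorem omegaIsProjectiveBimodule_iff :
    OmegaIsProjectiveBimodule k R C ρ ↔ IsRetractOfFree k C (Omega k R C ρ) := by
  constructor
  · rintro ⟨n, f, g, hgf, hfl, hfr, hgl, hgr⟩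
    exact ⟨n, f, g, hgf, fun a x => hfl a x _ rfl, fun a x => hfr a x _ rfl,
      fun a v => Subtype.ext (hgl a v), fun a v => Subtype.ext (hgr a v)⟩
  · rintro ⟨n, f, g, hgf, hfl, hfr, hgl, hgr⟩
    refine ⟨n, f, g, hgf, fun a x y hy => ?_, fun a x y hy => ?_,
      fun a v => congrArg Subtype.val (hgl a v), fun a v => congrArg Subtype.val (hgr a v)⟩
    · obtain rfl : y = a • x := Subtype.ext hy
      exact hfl a x
    · obtain rfl : y = op a • x := Subtype.ext hy
      exact hfr a x

variable {A : Type*} [Ring A] [Algebra k A]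

/-- A `k`-linear map from `C` to an `A`-bimodule that is a derivation for the `C`-bimodule structure
pulled back along `φ : C → A`. -/
def IsDerivation {N : Type*} [AddCommGroup N] [Module k N] [SMul A N] [SMul Aᵐᵒᵖ N]
    (φ : C →ₐ[k] A) (D : C →ₗ[k] N) : Prop :=
  ∀ a b, D (a * b) = φ a • D b + op (φ b) • D a

/-- A derivation along `φ` that vanishes on the image of `ρ : R → C`. -/
structure IsRelDerivation {N : Type*} [AddCommGroup N] [Module k N] [SMul A N] [SMul Aᵐᵒᵖ N]
    (ρ : R →ₐ[k] C) (φ : C →ₐ[k] A) (D : C →ₗ[k] N) : Prop where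
  isDerivation : IsDerivation φ D
  map_base : ∀ r, D (ρ r) = 0

lemma IsRelDerivation.comp_algHom {B : Type} [Ring B] [Algebra k B] {σ : R →ₐ[k] B}
    {N : Type*} [AddCommGroup N] [Module k N] [SMul A N] [SMul Aᵐᵒᵖ N] {φ : C →ₐ[k] A}
    {ι : B →ₐ[k] C} {D : C →ₗ[k] N} (hD : IsRelDerivation (ι.comp σ) φ D) :
    IsRelDerivation σ (φ.comp ι) (D ∘ₗ ι.toLinearMap) :=
  ⟨fun a b => by simpa using hD.isDerivation (ι a) (ι b), hD.map_base⟩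

lemma IsRelDerivation.bimoduleHom_comp {N N' : Type*} [AddCommGroup N] [Module k N] [SMul C N]
    [SMul Cᵐᵒᵖ N] [AddCommGroup N'] [Module k N'] [SMul A N'] [SMul Aᵐᵒᵖ N']
    {φ : C →ₐ[k] A} {f : N →ₗ[k] N'} (hf : IsBimoduleHom φ f) {D : C →ₗ[k] N}
    (hD : IsRelDerivation ρ (.id k C) D) : IsRelDerivation ρ φ (f ∘ₗ D) :=
  ⟨fun a b => by simp [hD.isDerivation a b, hf.map_smul, hf.map_op_smul],
    fun r => by simp [hD.map_base]⟩

variable (ρ) in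
/-- The universal derivation `c ↦ 1 ⊗ c - c ⊗ 1`. -/
def univDer : C →ₗ[k] Omega k R C ρ :=
  LinearMap.codRestrict _
    ((Submodule.mkQ _) ∘ₗ (TensorProduct.mk k C C 1 - (TensorProduct.mk k C C).flip 1))
    (fun c => by simp [mem_Omega])

lemma coe_univDer (c : C) : (univDer ρ c : QR k R C ρ) =
    Submodule.Quotient.mk ((1 : C) ⊗ₜ[k] c) - Submodule.Quotient.mk (c ⊗ₜ[k] (1 : C)) := rfl

lemma isRelDerivation_univDer : IsRelDerivation ρ (.id k C) (univDer ρ) where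
  isDerivation a b := Subtype.ext <| by simp [coe_univDer]
  map_base r := Subtype.ext <| by
    rw [coe_univDer, Submodule.coe_zero, ← neg_eq_zero, neg_sub, ← Submodule.Quotient.mk_sub,
      Submodule.Quotient.mk_eq_zero]
    exact Submodule.subset_span ⟨1, 1, r, by simp⟩

lemma exists_coe_eq_sub_mulBar_tmul_one (q : QR k R C ρ) :
    ∃ w ∈ Submodule.span (C ⊗[k] Cᵐᵒᵖ) (Set.range (univDer ρ)),
      (w : QR k R C ρ) = q - Submodule.Quotient.mk (mulBar k R C ρ q ⊗ₜ[k] (1 : C)) := by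
  obtain ⟨z, rfl⟩ := Submodule.Quotient.mk_surjective _ q
  induction z with
  | zero => exact ⟨0, zero_mem _, by simp⟩
  | tmul x y =>
    exact ⟨x • univDer ρ y, smul_mem_of_mem _ x (Submodule.subset_span ⟨y, rfl⟩),
      by simp [coe_univDer]⟩
  | add z w hz hw =>
    obtain ⟨u, hu, hu'⟩ := hz
    obtain ⟨v, hv, hv'⟩ := hw
    refine ⟨u + v, add_mem hu hv, ?_⟩
    rw [Submodule.coe_add, hu', hv', Submodule.Quotient.mk_add, map_add, add_tmul,
      Submodule.Quotient.mk_add]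
    abel

theorem span_range_univDer : Submodule.span (C ⊗[k] Cᵐᵒᵖ) (Set.range (univDer ρ)) = ⊤ := by
  refine eq_top_iff.2 fun x _ => ?_
  obtain ⟨w, hw, hwx⟩ := exists_coe_eq_sub_mulBar_tmul_one (x : QR k R C ρ)
  rw [mem_Omega.1 x.2, zero_tmul, Submodule.Quotient.mk_zero, sub_zero] at hwx
  rwa [← Subtype.ext hwx]

theorem finite_omega (h : IsFGOverR k R C ρ) :
    Module.Finite (C ⊗[k] Cᵐᵒᵖ) (Omega k R C ρ) := by
  obtain ⟨S, hS⟩ := h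
  set W := Submodule.span (C ⊗[k] Cᵐᵒᵖ) (univDer ρ '' S)
  have univDer_mem (c : C) : univDer ρ c ∈ W := by
    have hc : c ∈ Algebra.adjoin k (Set.range ρ ∪ ↑S) := hS ▸ Algebra.mem_top
    induction hc using Algebra.adjoin_induction with
    | mem x hx =>
      rcases hx with ⟨r, rfl⟩ | hx
      · simp [isRelDerivation_univDer.map_base]
      · exact Submodule.subset_span ⟨x, hx, rfl⟩
    | algebraMap c =>
      rw [← ρ.commutes c, isRelDerivation_univDer.map_base]
      exact zero_mem W
    | add x y _ _ hx hy => simpa using add_mem hx hy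
    | mul x y _ _ hx hy =>
      rw [isRelDerivation_univDer.isDerivation x y]
      exact add_mem (smul_mem_of_mem W _ hy) (op_smul_mem_of_mem W _ hx)
  refine .of_fg_top (Submodule.fg_def.2 ⟨univDer ρ '' S, S.finite_toSet.image _, eq_top_iff.2 ?_⟩)
  rw [← span_range_univDer, Submodule.span_le]
  rintro _ ⟨c, rfl⟩
  exact univDer_mem c

theorem isSmoothOver_iff : IsSmoothOver k R C ρ ↔
    IsFGOverR k R C ρ ∧ Module.Projective (C ⊗[k] Cᵐᵒᵖ) (Omega k R C ρ) := by
  rw [IsSmoothOver, omegaIsProjectiveBimodule_iff, isRetractOfFree_iff]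
  exact and_congr_right fun h => and_iff_right (finite_omega h)

section UniversalProperty

variable {N : Type*} [AddCommGroup N] [Module k N] [Module A N] [Module Aᵐᵒᵖ N]
  [IsScalarTower k A N] {φ : C →ₐ[k] A} {D : C →ₗ[k] N}

/-- The linear map `x ⊗ y ↦ φ x • D y` on `C ⊗_R C`; its restriction to `Ω¹` is the bimodule map
induced by the derivation `D`. -/
def IsRelDerivation.liftQuotient (hD : IsRelDerivation ρ φ D) : QR k R C ρ →ₗ[k] N :=
  Submodule.liftQ _
    (TensorProduct.lift (((Algebra.lsmul k k N).comp φ).toLinearMap.compl₂ D))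
    (by
      rw [Bal, Submodule.span_le]
      rintro z ⟨x, y, r, rfl⟩
      simp [hD.isDerivation (ρ r) y, hD.map_base])

@[simp]
lemma IsRelDerivation.liftQuotient_mk (hD : IsRelDerivation ρ φ D) (x y : C) :
    hD.liftQuotient (Submodule.Quotient.mk (x ⊗ₜ[k] y)) = φ x • D y := rfl

lemma IsRelDerivation.liftQuotient_smul (hD : IsRelDerivation ρ φ D) (a : C) (q : QR k R C ρ) :
    hD.liftQuotient (a • q) = φ a • hD.liftQuotient q := by
  obtain ⟨z, rfl⟩ := Submodule.Quotient.mk_surjective _ q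
  induction z with
  | zero => simp
  | tmul x y => simp [mul_smul]
  | add z w hz hw => simp only [Submodule.Quotient.mk_add, smul_add, map_add, hz, hw]

variable [SMulCommClass A Aᵐᵒᵖ N]

lemma IsRelDerivation.liftQuotient_op_smul (hD : IsRelDerivation ρ φ D) (a : C)
    (q : QR k R C ρ) : hD.liftQuotient (op a • q) =
      op (φ a) • hD.liftQuotient q + φ (mulBar k R C ρ q) • D a := by
  obtain ⟨z, rfl⟩ := Submodule.Quotient.mk_surjective _ q
  induction z with
  | zero => simp
  | tmul x y => simp [hD.isDerivation y a, mul_smul, smul_comm (φ x) (op (φ a)), add_comm]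
  | add z w hz hw =>
    simp only [Submodule.Quotient.mk_add, smul_add, map_add, add_smul, hz, hw]
    abel

theorem IsRelDerivation.exists_bimoduleHom (hD : IsRelDerivation ρ φ D) :
    ∃ u : Omega k R C ρ →ₗ[k] N, IsBimoduleHom φ u ∧ u ∘ₗ univDer ρ = D := by
  have hD1 : D 1 = 0 := by simpa using hD.map_base 1
  refine ⟨hD.liftQuotient ∘ₗ (Omega k R C ρ).subtype, ⟨fun a x => ?_, fun a x => ?_⟩, ?_⟩
  · exact hD.liftQuotient_smul a x
  · simpa [mem_Omega.1 x.2] using hD.liftQuotient_op_smul a x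
  · ext c
    simp [coe_univDer, hD1]

theorem IsRelDerivation.exists_lift [IsScalarTower k Aᵐᵒᵖ N]
    [Module.Projective (C ⊗[k] Cᵐᵒᵖ) (Omega k R C ρ)]
    {N' : Type*} [AddCommGroup N'] [Module k N'] [Module A N'] [Module Aᵐᵒᵖ N']
    [SMulCommClass A Aᵐᵒᵖ N'] [IsScalarTower k A N'] [IsScalarTower k Aᵐᵒᵖ N']
    {p : N' →ₗ[k] N} (hp : IsBimoduleHom (.id k A) p) (hsurj : Function.Surjective p)
    (hD : IsRelDerivation ρ φ D) :
    ∃ D' : C →ₗ[k] N', IsRelDerivation ρ φ D' ∧ p ∘ₗ D' = D := by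
  obtain ⟨u, hu, huD⟩ := hD.exists_bimoduleHom
  obtain ⟨v, hv, hpv⟩ := exists_bimoduleHom_lift hp hsurj (φ := φ) hu
  exact ⟨v ∘ₗ univDer ρ, isRelDerivation_univDer.bimoduleHom_comp hv,
    by rw [← LinearMap.comp_assoc, hpv, huD]⟩

end UniversalProperty

variable (ρ) in
/-- The universal derivation lifts along every surjective map of bimodules onto `Ω¹`. -/
def UnivDerLifts : Prop :=
  ∀ (N : Type) [AddCommGroup N] [Module k N] [Module C N] [Module Cᵐᵒᵖ N]
    [SMulCommClass C Cᵐᵒᵖ N] [IsScalarTower k C N] [IsScalarTower k Cᵐᵒᵖ N]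
    (p : N →ₗ[k] Omega k R C ρ), IsBimoduleHom (.id k C) p → Function.Surjective p →
    ∃ D : C →ₗ[k] N, IsRelDerivation ρ (.id k C) D ∧ p ∘ₗ D = univDer ρ

lemma UnivDerLifts.exists_comp_eq_id (h : UnivDerLifts ρ)
    {F : Type} [AddCommGroup F] [Module (C ⊗[k] Cᵐᵒᵖ) F]
    (p : F →ₗ[C ⊗[k] Cᵐᵒᵖ] Omega k R C ρ) (hsurj : Function.Surjective p) :
    ∃ s : Omega k R C ρ →ₗ[C ⊗[k] Cᵐᵒᵖ] F, p ∘ₗ s = .id := by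
  let : Module k F := Module.compHom F (algebraMap k (C ⊗[k] Cᵐᵒᵖ))
  have : IsScalarTower k (C ⊗[k] Cᵐᵒᵖ) F := ⟨fun c z x =>
    (congrArg (· • x) (Algebra.smul_def c z)).trans (mul_smul _ z x)⟩
  let : Module C F := Module.compHom F
    (Algebra.TensorProduct.includeLeft : C →ₐ[k] C ⊗[k] Cᵐᵒᵖ).toRingHom
  let : Module Cᵐᵒᵖ F := Module.compHom F
    (Algebra.TensorProduct.includeRight : Cᵐᵒᵖ →ₐ[k] C ⊗[k] Cᵐᵒᵖ).toRingHom
  have smul_eq (a : C) (x : F) : a • x = (a ⊗ₜ[k] (1 : Cᵐᵒᵖ)) • x := rfl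
  have op_smul_eq (a : Cᵐᵒᵖ) (x : F) : a • x = ((1 : C) ⊗ₜ[k] a) • x := rfl
  have : SMulCommClass C Cᵐᵒᵖ F := ⟨fun a b x => by
    simp only [smul_eq, op_smul_eq, smul_smul, Algebra.TensorProduct.tmul_mul_tmul, mul_one,
      one_mul]⟩
  have : IsScalarTower k C F := ⟨fun c a x => by
    rw [smul_eq, smul_eq, ← smul_tmul', smul_assoc]⟩
  have : IsScalarTower k Cᵐᵒᵖ F := ⟨fun c a x => by
    rw [op_smul_eq, op_smul_eq, tmul_smul, smul_assoc]⟩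
  obtain ⟨D, hD, hpD⟩ := h F (p.restrictScalars k)
    ⟨fun a x => (p.map_smul (a ⊗ₜ 1) x).trans (by rw [tmul_smul_eq, one_smul]; rfl),
      fun a x => (p.map_smul (1 ⊗ₜ op a) x).trans (by rw [tmul_smul_eq, one_smul]; rfl)⟩ hsurj
  obtain ⟨u, hu, huD⟩ := hD.exists_bimoduleHom
  let s : Omega k R C ρ →ₗ[C ⊗[k] Cᵐᵒᵖ] F := tensorLinearMap u.toAddMonoidHom
    (fun a x => by rw [tmul_smul_eq, one_smul]; exact hu.map_smul a x)
    (fun a x => by rw [tmul_smul_eq, one_smul]; exact hu.map_op_smul (unop a) x)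
  exact ⟨s, LinearMap.ext_on_range span_range_univDer fun c =>
    (congrArg p (LinearMap.congr_fun huD c)).trans (LinearMap.congr_fun hpD c)⟩

theorem UnivDerLifts.projective_omega (h : UnivDerLifts ρ) :
    Module.Projective (C ⊗[k] Cᵐᵒᵖ) (Omega k R C ρ) :=
  .of_lifting_property'' fun f hf =>
    h.exists_comp_eq_id (F := Omega k R C ρ →₀ C ⊗[k] Cᵐᵒᵖ) f hf

end OmegaBimodule

section SquareZero

variable {k}
variable {C : Type} [Ring C] [Algebra k C] {A : Type*} [Ring A] [Algebra k A] {φ : C →ₐ[k] A}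
variable {N : Type*} [AddCommGroup N] [Module k N] [Module A N] [Module Aᵐᵒᵖ N]
  [SMulCommClass A Aᵐᵒᵖ N] [IsScalarTower k A N] [IsScalarTower k Aᵐᵒᵖ N]

/-- The algebra homomorphism `c ↦ (φ c, D c)` into the square-zero extension of `A` by `N` given by
a derivation `D : C → N`. -/
def IsDerivation.toTrivSqZeroExt {D : C →ₗ[k] N} (hD : IsDerivation φ D) :
    C →ₐ[k] TrivSqZeroExt A N :=
  AlgHom.ofLinearMap (LinearMap.prod φ.toLinearMap D : C →ₗ[k] A × N)
    (TrivSqZeroExt.ext (map_one φ) (by simpa using! hD 1 1))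
    (fun a b => TrivSqZeroExt.ext (map_mul φ a b) (hD a b))

lemma isDerivation_snd (F : C →ₐ[k] TrivSqZeroExt A N) (hF : ∀ c, (F c).fst = φ c) :
    IsDerivation φ ((TrivSqZeroExt.sndHom A N).restrictScalars k ∘ₗ F.toLinearMap) :=
  fun a b => by simp [hF]

variable {N' : Type*} [AddCommGroup N'] [Module k N'] [Module A N'] [Module Aᵐᵒᵖ N']
  [SMulCommClass A Aᵐᵒᵖ N'] [IsScalarTower k A N'] [IsScalarTower k Aᵐᵒᵖ N']

/-- The algebra homomorphism `(a, x) ↦ (a, p x)` between square-zero extensions of `A` given by a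
bimodule map `p`. -/
def IsBimoduleHom.mapTrivSqZeroExt {p : N' →ₗ[k] N} (hp : IsBimoduleHom (.id k A) p) :
    TrivSqZeroExt A N' →ₐ[k] TrivSqZeroExt A N :=
  AlgHom.ofLinearMap (LinearMap.prodMap LinearMap.id p : A × N' →ₗ[k] A × N)
    (TrivSqZeroExt.ext rfl (map_zero p))
    (fun x y => TrivSqZeroExt.ext rfl <|
      (map_add p (x.fst • y.snd) (op y.fst • x.snd)).trans <|
        congrArg₂ (· + ·) (hp.map_smul _ _) (hp.map_op_smul _ _))

lemma IsBimoduleHom.mapTrivSqZeroExt_surjective {p : N' →ₗ[k] N}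
    (hp : IsBimoduleHom (.id k A) p) (hsurj : Function.Surjective p) :
    Function.Surjective hp.mapTrivSqZeroExt := fun x => by
  obtain ⟨y, hy⟩ := hsurj x.snd
  exact ⟨(x.fst, y), TrivSqZeroExt.ext rfl hy⟩

end SquareZero

section TensorAlgebra

variable {k}
variable {B : Type} [Ring B] [Algebra k B]
  {M : Type} [AddCommGroup M] [Module k M] [Module B M] [Module Bᵐᵒᵖ M]
  {A : Type} [Ring A] [Algebra k A] {ιB : B →ₐ[k] A} {ιM : M →ₗ[k] A}

/-- `A`, together with `ιB : B → A` and `ιM : M → A`, is the tensor algebra of the `B`-bimodule `M`,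
expressed by its universal property. -/
structure IsTensorAlgebra (ιB : B →ₐ[k] A) (ιM : M →ₗ[k] A) : Prop where
  isBimoduleHom : IsBimoduleHom ιB ιM
  existsUnique_lift : ∀ (E : Type) [Ring E] [Algebra k E] (fB : B →ₐ[k] E) (fM : M →ₗ[k] E),
    IsBimoduleHom fB fM → ∃! F : A →ₐ[k] E, (∀ b, F (ιB b) = fB b) ∧ ∀ m, F (ιM m) = fM m

namespace IsTensorAlgebra

variable {E E' : Type} [Ring E] [Algebra k E] [Ring E'] [Algebra k E']

theorem algHom_ext (hA : IsTensorAlgebra ιB ιM) {F G : A →ₐ[k] E}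
    (hB : ∀ b, F (ιB b) = G (ιB b)) (hM : ∀ m, F (ιM m) = G (ιM m)) : F = G :=
  (hA.existsUnique_lift E (G.comp ιB) (G.toLinearMap ∘ₗ ιM)
    ((isBimoduleHom_algHom G).comp hA.isBimoduleHom)).unique ⟨hB, hM⟩ ⟨fun _ => rfl, fun _ => rfl⟩

theorem adjoin_eq_top (hA : IsTensorAlgebra ιB ιM) :
    Algebra.adjoin k (Set.range ιB ∪ Set.range ιM) = ⊤ := by
  set T := Algebra.adjoin k (Set.range ιB ∪ Set.range ιM)
  have hB (b : B) : ιB b ∈ T := Algebra.subset_adjoin (Or.inl ⟨b, rfl⟩)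
  have hM (m : M) : ιM m ∈ T := Algebra.subset_adjoin (Or.inr ⟨m, rfl⟩)
  obtain ⟨F, ⟨hFB, hFM⟩, -⟩ := hA.existsUnique_lift T (ιB.codRestrict T hB)
    (ιM.codRestrict (Subalgebra.toSubmodule T) hM)
    ⟨fun b m => Subtype.ext (hA.isBimoduleHom.map_smul b m),
      fun b m => Subtype.ext (hA.isBimoduleHom.map_op_smul b m)⟩
  have hF : T.val.comp F = .id k A :=
    hA.algHom_ext (fun b => congrArg Subtype.val (hFB b)) (fun m => congrArg Subtype.val (hFM m))
  refine eq_top_iff.2 fun a _ => ?_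
  have hFa : (F a : A) = a := AlgHom.congr_fun hF a
  exact hFa ▸ (F a).2

variable [SMulCommClass B Bᵐᵒᵖ M] [IsScalarTower k B M] [IsScalarTower k Bᵐᵒᵖ M]

theorem isFGOverR (hA : IsTensorAlgebra ιB ιM) {R : Type} [Ring R] [Algebra k R] {ρ : R →ₐ[k] B}
    (hB : IsFGOverR k R B ρ) [hM : Module.Finite (B ⊗[k] Bᵐᵒᵖ) M] :
    IsFGOverR k R A (ιB.comp ρ) := by
  classical
  obtain ⟨S, hS⟩ := hB
  obtain ⟨S', hS'⟩ := hM.fg_top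
  refine ⟨S.image ιB ∪ S'.image ιM, top_le_iff.1 ?_⟩
  set T := Algebra.adjoin k (Set.range (ιB.comp ρ) ∪ ↑(S.image ιB ∪ S'.image ιM))
  have ιB_mem (b : B) : ιB b ∈ T := by
    have : Algebra.adjoin k (Set.range ρ ∪ ↑S) ≤ T.comap ιB := by
      refine Algebra.adjoin_le ?_
      rintro _ (⟨r, rfl⟩ | hs)
      · exact Algebra.subset_adjoin (Or.inl ⟨r, rfl⟩)
      · exact Algebra.subset_adjoin (Or.inr (by simpa using Or.inl ⟨_, hs, rfl⟩))
    exact this (hS ▸ Algebra.mem_top)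
  have ιM_mem := hA.isBimoduleHom.apply_mem_of_span_eq_top ιB_mem hS' fun s hs =>
    Algebra.subset_adjoin (Or.inr (by simpa using Or.inr ⟨s, hs, rfl⟩))
  rw [← hA.adjoin_eq_top]
  refine Algebra.adjoin_le ?_
  rintro _ (⟨b, rfl⟩ | ⟨m, rfl⟩)
  exacts [ιB_mem b, ιM_mem m]

variable [Module.Projective (B ⊗[k] Bᵐᵒᵖ) M]

theorem exists_lift (hA : IsTensorAlgebra ιB ιM) {π : E' →ₐ[k] E} (hπ : Function.Surjective π)
    {φ : B →ₐ[k] E'} {F : A →ₐ[k] E} (h : π.comp φ = F.comp ιB) :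
    ∃ F' : A →ₐ[k] E', F'.comp ιB = φ ∧ π.comp F' = F := by
  have hF : IsBimoduleHom (π.comp φ) (F.toLinearMap ∘ₗ ιM) :=
    h ▸ (isBimoduleHom_algHom F).comp hA.isBimoduleHom
  obtain ⟨v, hv, hπv⟩ := exists_bimoduleHom_lift (isBimoduleHom_algHom π) hπ hF
  obtain ⟨F', ⟨hF'B, hF'M⟩, -⟩ := hA.existsUnique_lift E' φ v hv
  refine ⟨F', AlgHom.ext hF'B, hA.algHom_ext (fun b => ?_) (fun m => ?_)⟩
  · exact (congrArg π (hF'B b)).trans (AlgHom.congr_fun h b)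
  · exact (congrArg π (hF'M m)).trans (LinearMap.congr_fun hπv m)

variable {R : Type} [Ring R] [Algebra k R] {ρ : R →ₐ[k] B}

theorem univDerLifts (hA : IsTensorAlgebra ιB ιM)
    [Module.Projective (B ⊗[k] Bᵐᵒᵖ) (Omega k R B ρ)] : UnivDerLifts (ιB.comp ρ) := by
  intro N _ _ _ _ _ _ _ p hp hsurj
  have hd := isRelDerivation_univDer (ρ := ιB.comp ρ)
  obtain ⟨D, hD, hpD⟩ := hd.comp_algHom.exists_lift hp hsurj
  have hδ : hp.mapTrivSqZeroExt.comp hD.isDerivation.toTrivSqZeroExt =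
      hd.isDerivation.toTrivSqZeroExt.comp ιB :=
    AlgHom.ext fun b => TrivSqZeroExt.ext rfl (LinearMap.congr_fun hpD b)
  obtain ⟨F, hFB, hpF⟩ := hA.exists_lift (hp.mapTrivSqZeroExt_surjective hsurj) hδ
  have fst_F (a : A) : (F a).fst = a := congrArg TrivSqZeroExt.fst (AlgHom.congr_fun hpF a)
  refine ⟨_, ⟨isDerivation_snd F fst_F, fun r => ?_⟩, LinearMap.ext fun a => ?_⟩
  · exact (congrArg TrivSqZeroExt.snd (AlgHom.congr_fun hFB (ρ r))).trans (hD.map_base r)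
  · exact congrArg TrivSqZeroExt.snd (AlgHom.congr_fun hpF a)

theorem isSmoothOver (hA : IsTensorAlgebra ιB ιM) [Module.Finite (B ⊗[k] Bᵐᵒᵖ) M]
    (hB : IsSmoothOver k R B ρ) : IsSmoothOver k R A (ιB.comp ρ) := by
  obtain ⟨hfg, _⟩ := isSmoothOver_iff.1 hB
  exact isSmoothOver_iff.2 ⟨hA.isFGOverR hfg, hA.univDerLifts.projective_omega⟩

end IsTensorAlgebra
end TensorAlgebra

theorem statement5
    (R : Type) [Ring R] [Algebra k R]
    (B : Type) [Ring B] [Algebra k B] (ρR : R →ₐ[k] B)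
    (M : Type) [AddCommGroup M] [Module k M] [Module B M] [Module Bᵐᵒᵖ M]
    [SMulCommClass B Bᵐᵒᵖ M] [IsScalarTower k B M] [IsScalarTower k Bᵐᵒᵖ M]
    (A : Type) [Ring A] [Algebra k A] (ιB : B →ₐ[k] A) (ιM : M →ₗ[k] A)
    -- B is smooth over R
    (hBsmooth : IsSmoothOver k R B ρR)
    -- M is a finitely generated projective B-bimodule
    (hMfg : ∃ S : Finset M,
      Submodule.span k {x | ∃ (b b' : B) (s : M), s ∈ S ∧ x = b • (op b') • s} = ⊤)
    (hMproj : ∃ (n : ℕ) (f : M →ₗ[k] (Fin n → B ⊗[k] Bᵐᵒᵖ))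
        (g : (Fin n → B ⊗[k] Bᵐᵒᵖ) →ₗ[k] M),
      (∀ x, g (f x) = x) ∧
      (∀ (b : B) (m : M), f (b • m) = fun i => (b ⊗ₜ[k] (1 : Bᵐᵒᵖ)) * f m i) ∧
      (∀ (b : B) (m : M), f (op b • m) = fun i => ((1 : B) ⊗ₜ[k] op b) * f m i) ∧
      (∀ (b : B) (v : Fin n → B ⊗[k] Bᵐᵒᵖ),
        g (fun i => (b ⊗ₜ[k] (1 : Bᵐᵒᵖ)) * v i) = b • g v) ∧
      (∀ (b : B) (v : Fin n → B ⊗[k] Bᵐᵒᵖ),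
        g (fun i => ((1 : B) ⊗ₜ[k] op b) * v i) = op b • g v))
    -- A = T_B M via the universal property
    (hL : ∀ (b : B) (m : M), ιM (b • m) = ιB b * ιM m)
    (hRc : ∀ (b : B) (m : M), ιM (op b • m) = ιM m * ιB b)
    (hUP : ∀ (C : Type) [Ring C] [Algebra k C] (fB : B →ₐ[k] C) (fM : M →ₗ[k] C),
      (∀ (b : B) (m : M), fM (b • m) = fB b * fM m) →
      (∀ (b : B) (m : M), fM (op b • m) = fM m * fB b) →
      ∃! F : A →ₐ[k] C, (∀ b : B, F (ιB b) = fB b) ∧ (∀ m : M, F (ιM m) = fM m)) :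
    -- Conclusion: A = T_B M is smooth over R.
    IsSmoothOver k R A (ιB.comp ρR) := by
  have hA : IsTensorAlgebra ιB ιM := ⟨⟨hL, hRc⟩, fun C _ _ fB fM h => hUP C fB fM h.1 h.2⟩
  obtain ⟨_, _⟩ := isRetractOfFree_iff.1 hMproj
  exact hA.isSmoothOver hBsmooth

end Stmt5
end
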